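/- arXiv:2510.08283 — 2 statements merged into one kernel-verified Lean document; each statement's English description precedes it below -/
import Mathlib

section
/- Let V = ℝⁿ, let R be a finite set of nonzero vectors with R = −R, let R⁺ ⊆ R with R = R⁺ ⊔ (−R⁺), and let k : R → ℝ be even. Assume that for each α ∈ R⁺ the reflection s_α maps R onto R and k(s_α β) = k(β) for all β ∈ R. Let δ_k(x) = ∏_{α∈R⁺} |⟨α,x⟩|^{2k(α)} and, for ξ ∈ V, define the Dunkl operator T_ξ f(x) = ∂_ξ f(x) + Σ_{α∈R⁺} k(α)(⟨α,ξ⟩/⟨α,x⟩)(f(x) − f(s_α x)). Then for all smooth compactly supported f, g : V → ℝ whose supports lie in {x : ⟨α,x⟩ ≠ 0 for all α ∈ R⁺}, the following holds: ∫_V (T_ξ f)(x) g(x) δ_k(x) dx = −∫_V f(x) (T_ξ g)(x) δ_k(x) dx. That is, T_ξ is formally skew-adjoint on L²(V, δ_k(x) dx). -/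
/-!
The sum of the two integrands is a derivative plus terms which are odd under a reflection.
Off the hyperplanes `⟪α, x⟫ = 0` the weight satisfies
`∂_ξ δ = δ ∑ 2 k(α) ⟪α, ξ⟫ / ⟪α, x⟫` (`weight_hasFDerivAt`), so that
`(T_ξ f) g δ + f (T_ξ g) δ = (fg) ∂_ξ δ + ∂_ξ(fg) δ - ∑ H_α`, with
`H_α(x) = k(α) ⟪α, ξ⟫ / ⟪α, x⟫ (f(s_α x) g(x) + f(x) g(s_α x)) δ(x)`.
The first two terms integrate to zero by integration by parts. Each `H_α` changes sign under the
measure preserving map `s_α`, because `⟪α, s_α x⟫ = -⟪α, x⟫` and `δ` is invariant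
(`weight_reflAlong`), hence integrates to zero. Every function involved is the product of `f` or
`g` with a function continuous off the hyperplanes, which gives integrability although `k` may be
negative.
-/

open scoped RealInnerProductSpace BigOperators
open MeasureTheory

/-- The orthogonal reflection across the hyperplane `⟨α, x⟩ = 0`. -/
noncomputable def reflAlong {n : ℕ} (α x : EuclideanSpace ℝ (Fin n)) :
    EuclideanSpace ℝ (Fin n) :=
  x - (2 * ⟪α, x⟫ / ⟪α, α⟫) • α

/-- The Dunkl operator
`T_ξ f(x) = ∂_ξ f(x) + ∑_{α ∈ R⁺} k(α) (⟨α,ξ⟩/⟨α,x⟩) (f(x) − f(s_α x))`. -/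
noncomputable def dunklOp {n : ℕ} (Rp : Finset (EuclideanSpace ℝ (Fin n)))
    (k : EuclideanSpace ℝ (Fin n) → ℝ) (ξ : EuclideanSpace ℝ (Fin n))
    (f : EuclideanSpace ℝ (Fin n) → ℝ) (x : EuclideanSpace ℝ (Fin n)) : ℝ :=
  fderiv ℝ f x ξ +
    ∑ α ∈ Rp, k α * (⟪α, ξ⟫ / ⟪α, x⟫) * (f x - f (reflAlong α x))

/-! ### Reflections -/

section Reflection

variable {n : ℕ}

lemma inner_reflAlong (α x y : EuclideanSpace ℝ (Fin n)) :
    ⟪reflAlong α x, y⟫ = ⟪x, reflAlong α y⟫ := by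
  simp only [reflAlong, inner_sub_left, inner_sub_right, inner_smul_left, inner_smul_right,
    real_inner_comm α, RCLike.conj_to_real]
  ring

lemma inner_self_reflAlong {α : EuclideanSpace ℝ (Fin n)} (hα : α ≠ 0)
    (x : EuclideanSpace ℝ (Fin n)) : ⟪α, reflAlong α x⟫ = -⟪α, x⟫ := by
  have : ⟪α, α⟫ ≠ 0 := inner_self_ne_zero.2 hα
  simp only [reflAlong, inner_sub_right, inner_smul_right]
  field_simp
  ring

lemma reflAlong_reflAlong {α : EuclideanSpace ℝ (Fin n)} (hα : α ≠ 0)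
    (x : EuclideanSpace ℝ (Fin n)) : reflAlong α (reflAlong α x) = x := by
  have h := inner_self_reflAlong hα x
  rw [reflAlong, h, reflAlong, mul_neg, neg_div, neg_smul]
  abel

lemma reflAlong_eq_reflection (α x : EuclideanSpace ℝ (Fin n)) :
    reflAlong α x = (ℝ ∙ α)ᗮ.reflection x := by
  rw [Submodule.reflection_orthogonal_apply, Submodule.reflection_singleton_apply, reflAlong,
    real_inner_self_eq_norm_sq]
  simp only [RCLike.ofReal_real_eq_id, id, two_smul, ← add_smul, neg_sub]
  congr 2
  ring

lemma continuous_reflAlong (α : EuclideanSpace ℝ (Fin n)) : Continuous (reflAlong α) := by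
  unfold reflAlong
  fun_prop

/-- A function that is odd under a reflection has integral zero. No integrability is needed: a
non-integrable function has integral zero by convention. -/
lemma integral_eq_zero_of_odd (α : EuclideanSpace ℝ (Fin n))
    (H : EuclideanSpace ℝ (Fin n) → ℝ) (hH : ∀ x, H (reflAlong α x) = -H x) :
    ∫ x, H x = 0 := by
  have h := (LinearIsometryEquiv.measurePreserving (ℝ ∙ α)ᗮ.reflection).integral_comp
    (ℝ ∙ α)ᗮ.reflection.toHomeomorph.measurableEmbedding H
  simp only [← reflAlong_eq_reflection, hH, integral_neg] at h
  linarith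

end Reflection

/-! ### The weight: invariance and logarithmic derivative -/

section Weight

variable {n : ℕ}

/-- The weight is a product over all of `R`, with exponents `k` in place of `2k`; in this form its
invariance is a reindexing. -/
lemma weight_eq_prod (R Rp : Finset (EuclideanSpace ℝ (Fin n)))
    (hunion : (R : Set (EuclideanSpace ℝ (Fin n))) = ↑Rp ∪ (fun α => -α) '' ↑Rp)
    (hdisj : Disjoint (Rp : Set (EuclideanSpace ℝ (Fin n))) ((fun α => -α) '' ↑Rp))
    (k : EuclideanSpace ℝ (Fin n) → ℝ) (hkeven : ∀ α ∈ R, k (-α) = k α)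
    (x : EuclideanSpace ℝ (Fin n)) :
    ∏ α ∈ Rp, |⟪α, x⟫| ^ (2 * k α) = ∏ α ∈ R, |⟪α, x⟫| ^ k α := by
  classical
  have hR : R = Rp ∪ Rp.image (fun α => -α) := by
    apply Finset.coe_injective
    rw [hunion]; simp
  have hd : Disjoint Rp (Rp.image (fun α => -α)) := by
    rw [← Finset.disjoint_coe]; simpa using hdisj
  have hsub : ∀ α ∈ Rp, α ∈ R := fun α h => by
    rw [hR]; exact Finset.mem_union_left _ h
  have e : ∏ α ∈ R, |⟪α, x⟫| ^ k α = ∏ α ∈ Rp ∪ Rp.image (fun α => -α), |⟪α, x⟫| ^ k α := by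
    rw [← hR]
  rw [e, Finset.prod_union hd, Finset.prod_image (fun a _ b _ h => neg_injective h),
    ← Finset.prod_mul_distrib]
  refine Finset.prod_congr rfl fun α hα => ?_
  rw [hkeven α (hsub α hα), inner_neg_left, abs_neg, mul_comm 2, ← sq]
  exact_mod_cast Real.rpow_mul_natCast (abs_nonneg _) (k α) 2

lemma weight_reflAlong (R Rp : Finset (EuclideanSpace ℝ (Fin n)))
    (hR0 : ∀ α ∈ R, α ≠ 0)
    (hunion : (R : Set (EuclideanSpace ℝ (Fin n))) = ↑Rp ∪ (fun α => -α) '' ↑Rp)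
    (hdisj : Disjoint (Rp : Set (EuclideanSpace ℝ (Fin n))) ((fun α => -α) '' ↑Rp))
    (hstab : ∀ α ∈ Rp, ∀ β, β ∈ R ↔ reflAlong α β ∈ R)
    (k : EuclideanSpace ℝ (Fin n) → ℝ)
    (hkeven : ∀ α ∈ R, k (-α) = k α)
    (hkinv : ∀ α ∈ Rp, ∀ β ∈ R, k (reflAlong α β) = k β)
    {α : EuclideanSpace ℝ (Fin n)} (hα : α ∈ Rp) (x : EuclideanSpace ℝ (Fin n)) :
    ∏ β ∈ Rp, |⟪β, reflAlong α x⟫| ^ (2 * k β) = ∏ β ∈ Rp, |⟪β, x⟫| ^ (2 * k β) := by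
  have hα0 : α ≠ 0 := hR0 α (by rw [← Finset.mem_coe, hunion]; exact Or.inl hα)
  rw [weight_eq_prod R Rp hunion hdisj k hkeven, weight_eq_prod R Rp hunion hdisj k hkeven]
  refine Finset.prod_nbij' (reflAlong α) (reflAlong α) (fun β hβ => (hstab α hα β).1 hβ)
    (fun β hβ => (hstab α hα β).1 hβ) (fun β _ => reflAlong_reflAlong hα0 β)
    (fun β _ => reflAlong_reflAlong hα0 β) (fun β hβ => ?_)
  rw [hkinv α hα β hβ, inner_reflAlong]

lemma hasDerivAt_abs_rpow_of_ne {t : ℝ} (ht : t ≠ 0) (p : ℝ) :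
    HasDerivAt (fun t : ℝ => |t| ^ p) (|t| ^ p * (p / t)) t := by
  have h := (hasDerivAt_abs ht).rpow_const (p := p) (Or.inl (abs_ne_zero.2 ht))
  convert h using 1
  rw [Real.rpow_sub_one (abs_ne_zero.2 ht)]
  rcases ht.lt_or_gt with h | h
  · simp only [abs_of_neg h, sign_neg h, SignType.coe_neg_one]
    field_simp
  · simp only [abs_of_pos h, sign_pos h, SignType.coe_one]
    field_simp

/-- The logarithmic derivative of the weight off the hyperplanes. -/
lemma weight_hasFDerivAt (Rp : Finset (EuclideanSpace ℝ (Fin n)))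
    (k : EuclideanSpace ℝ (Fin n) → ℝ) (ξ x : EuclideanSpace ℝ (Fin n))
    (hx : ∀ α ∈ Rp, ⟪α, x⟫ ≠ 0) :
    ∃ L : EuclideanSpace ℝ (Fin n) →L[ℝ] ℝ,
      HasFDerivAt (fun x => ∏ α ∈ Rp, |⟪α, x⟫| ^ (2 * k α)) L x ∧
      L ξ = (∏ α ∈ Rp, |⟪α, x⟫| ^ (2 * k α)) * ∑ α ∈ Rp, 2 * k α * (⟪α, ξ⟫ / ⟪α, x⟫) := by
  classical
  induction Rp using Finset.induction_on with
  | empty => exact ⟨0, by simpa using hasFDerivAt_const (1 : ℝ) x, by simp⟩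
  | insert a s ha ih =>
    obtain ⟨L, hL, hLξ⟩ := ih fun α h => hx α (Finset.mem_insert_of_mem h)
    have h1 : HasFDerivAt (fun x : EuclideanSpace ℝ (Fin n) => ⟪a, x⟫) (innerSL ℝ a) x :=
      (innerSL ℝ a).hasFDerivAt
    have h2 := (hasDerivAt_abs_rpow_of_ne (hx a (Finset.mem_insert_self _ _))
      (2 * k a)).comp_hasFDerivAt x h1
    simp only [Finset.prod_insert ha]
    refine ⟨_, h2.mul hL, ?_⟩
    · simp only [Finset.sum_insert ha, Function.comp_apply,
        add_apply, smul_apply, hLξ, smul_eq_mul,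
        innerSL_apply_apply]
      ring

end Weight

/-! ### Integrability and the integral identity -/

/-- A compactly supported continuous function times a function continuous on its support is
integrable. -/
lemma integrable_mul_of_tsupport_subset {n : ℕ} {f w : EuclideanSpace ℝ (Fin n) → ℝ}
    {U : Set (EuclideanSpace ℝ (Fin n))} (hf : Continuous f) (hfc : HasCompactSupport f)
    (hfU : tsupport f ⊆ U) (hw : ContinuousOn w U) : Integrable (fun x => f x * w x) := by
  have h : IntegrableOn (fun x => f x * w x) (tsupport f) :=
    (hf.continuousOn.mul (hw.mono hfU)).integrableOn_compact hfc
  refine (integrableOn_iff_integrable_of_support_subset ?_).1 h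
  exact (Function.support_mul_subset_left _ _).trans (subset_tsupport f)

lemma dunklOp_continuousOn {n : ℕ} (Rp : Finset (EuclideanSpace ℝ (Fin n)))
    (k : EuclideanSpace ℝ (Fin n) → ℝ) (ξ : EuclideanSpace ℝ (Fin n))
    (f : EuclideanSpace ℝ (Fin n) → ℝ) (hf : ContDiff ℝ (⊤ : ℕ∞) f) :
    ContinuousOn (dunklOp Rp k ξ f) {x | ∀ α ∈ Rp, ⟪α, x⟫ ≠ 0} := by
  unfold dunklOp
  refine ContinuousOn.add ?_ (continuousOn_finsetSum _ fun α hα => ?_)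
  · exact ((hf.continuous_fderiv (by simp)).clm_apply continuous_const).continuousOn
  · refine ContinuousOn.mul (continuousOn_const.mul (continuousOn_const.div ?_ ?_)) ?_
    · fun_prop
    · exact fun x hx => hx α hα
    · exact (hf.continuous.sub (hf.continuous.comp (continuous_reflAlong α))).continuousOn

/-- **Formal skew-adjointness of the Dunkl operator** on `L²(V, δ_k(x)dx)`:
`∫ (T_ξ f) g δ_k dx = −∫ f (T_ξ g) δ_k dx` for smooth compactly supported `f, g`
whose supports avoid all the reflection hyperplanes. -/
theorem dunkl_operator_skew_adjoint {n : ℕ}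
    (R Rp : Finset (EuclideanSpace ℝ (Fin n)))
    (hR0 : ∀ α ∈ R, α ≠ 0)
    (hRneg : ∀ α, α ∈ R ↔ -α ∈ R)
    (hunion : (R : Set (EuclideanSpace ℝ (Fin n))) = ↑Rp ∪ (fun α => -α) '' ↑Rp)
    (hdisj : Disjoint (Rp : Set (EuclideanSpace ℝ (Fin n))) ((fun α => -α) '' ↑Rp))
    (hstab : ∀ α ∈ Rp, ∀ β, β ∈ R ↔ reflAlong α β ∈ R)
    (k : EuclideanSpace ℝ (Fin n) → ℝ)
    (hkeven : ∀ α ∈ R, k (-α) = k α)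
    (hkinv : ∀ α ∈ Rp, ∀ β ∈ R, k (reflAlong α β) = k β)
    (δ : EuclideanSpace ℝ (Fin n) → ℝ)
    (hδ : ∀ x, δ x = ∏ α ∈ Rp, |⟪α, x⟫| ^ (2 * k α))
    (ξ : EuclideanSpace ℝ (Fin n))
    (f g : EuclideanSpace ℝ (Fin n) → ℝ)
    (hf : ContDiff ℝ (⊤ : ℕ∞) f) (hg : ContDiff ℝ (⊤ : ℕ∞) g)
    (hfc : HasCompactSupport f) (hgc : HasCompactSupport g)
    (hfs : tsupport f ⊆ {x | ∀ α ∈ Rp, ⟪α, x⟫ ≠ 0})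
    (hgs : tsupport g ⊆ {x | ∀ α ∈ Rp, ⟪α, x⟫ ≠ 0}) :
    ∫ x, dunklOp Rp k ξ f x * g x * δ x =
      -∫ x, f x * dunklOp Rp k ξ g x * δ x := by
  obtain rfl : δ = fun x => ∏ α ∈ Rp, |⟪α, x⟫| ^ (2 * k α) := funext hδ
  set δ : EuclideanSpace ℝ (Fin n) → ℝ := fun x => ∏ α ∈ Rp, |⟪α, x⟫| ^ (2 * k α) with hδdef
  set U : Set (EuclideanSpace ℝ (Fin n)) := {x | ∀ α ∈ Rp, ⟪α, x⟫ ≠ 0} with hU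
  have hα0 : ∀ α ∈ Rp, α ≠ 0 := fun α hα =>
    hR0 α (by rw [← Finset.mem_coe, hunion]; exact Or.inl hα)
  have hδinv : ∀ α ∈ Rp, ∀ x, δ (reflAlong α x) = δ x := fun α hα x =>
    weight_reflAlong R Rp hR0 hunion hdisj hstab k hkeven hkinv hα x
  have hδd : ∀ x ∈ U, DifferentiableAt ℝ δ x := fun x hx =>
    (weight_hasFDerivAt Rp k ξ x hx).choose_spec.1.differentiableAt
  have hδ' : ∀ x ∈ U, fderiv ℝ δ x ξ = δ x * ∑ α ∈ Rp, 2 * k α * (⟪α, ξ⟫ / ⟪α, x⟫) := by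
    intro x hx
    obtain ⟨L, hL, hLξ⟩ := weight_hasFDerivAt Rp k ξ x hx
    rw [hL.fderiv, hLξ]
  have hδc : ContinuousOn δ U := fun x hx => (hδd x hx).continuousAt.continuousWithinAt
  have hinv : ∀ α ∈ Rp, ContinuousOn (fun x => ⟪α, ξ⟫ / ⟪α, x⟫) U := fun α hα =>
    continuousOn_const.div (by fun_prop) fun x hx => hx α hα
  have hδ'c : ContinuousOn (fun x => fderiv ℝ δ x ξ) U := by
    refine ContinuousOn.congr (f := fun x => δ x * ∑ α ∈ Rp, 2 * k α * (⟪α, ξ⟫ / ⟪α, x⟫)) ?_ hδ'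
    exact hδc.mul (continuousOn_finsetSum _ fun α hα => continuousOn_const.mul (hinv α hα))
  have hfd : Differentiable ℝ f := hf.differentiable (by simp)
  have hgd : Differentiable ℝ g := hg.differentiable (by simp)
  have hf'c : Continuous fun x => fderiv ℝ f x ξ :=
    (hf.continuous_fderiv (by simp)).clm_apply continuous_const
  have hg'c : Continuous fun x => fderiv ℝ g x ξ :=
    (hg.continuous_fderiv (by simp)).clm_apply continuous_const
  have hfg' : ∀ x, fderiv ℝ (fun x => f x * g x) x ξ
      = f x * fderiv ℝ g x ξ + g x * fderiv ℝ f x ξ := by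
    intro x
    rw [fderiv_fun_mul (hfd x) (hgd x)]
    simp
  have hP : Integrable fun x => dunklOp Rp k ξ f x * g x * δ x := by
    refine (integrable_mul_of_tsupport_subset hg.continuous hgc hgs
      ((dunklOp_continuousOn Rp k ξ f hf).mul hδc)).congr (.of_forall fun x => ?_)
    simp only [Pi.mul_apply]; ring
  have hQ : Integrable fun x => f x * dunklOp Rp k ξ g x * δ x := by
    refine (integrable_mul_of_tsupport_subset hf.continuous hfc hfs
      ((dunklOp_continuousOn Rp k ξ g hg).mul hδc)).congr (.of_forall fun x => ?_)
    simp only [Pi.mul_apply]; ring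
  have hA : Integrable fun x => fderiv ℝ (fun x => f x * g x) x ξ * δ x := by
    refine ((integrable_mul_of_tsupport_subset hf.continuous hfc hfs
      (hg'c.continuousOn.mul hδc)).add (integrable_mul_of_tsupport_subset hg.continuous hgc hgs
      (hf'c.continuousOn.mul hδc))).congr (.of_forall fun x => ?_)
    simp only [hfg', Pi.add_apply, Pi.mul_apply]; ring
  have hB : Integrable fun x => (f x * g x) * fderiv ℝ δ x ξ := by
    refine (integrable_mul_of_tsupport_subset hf.continuous hfc hfs
      (hg.continuous.continuousOn.mul hδ'c)).congr (.of_forall fun x => ?_)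
    simp only [Pi.mul_apply]; ring
  have hC : Integrable fun x => (f x * g x) * δ x := by
    refine (integrable_mul_of_tsupport_subset hf.continuous hfc hfs
      (hg.continuous.continuousOn.mul hδc)).congr (.of_forall fun x => ?_)
    simp only [Pi.mul_apply]; ring
  have hparts := integral_mul_fderiv_eq_neg_fderiv_mul_of_integrable hA hB hC
    (fun x _ => (hfd x).mul (hgd x))
    (fun x hx => hδd x (hfs (tsupport_mul_subset_left hx)))
  let H : EuclideanSpace ℝ (Fin n) → EuclideanSpace ℝ (Fin n) → ℝ := fun α x =>
    k α * (⟪α, ξ⟫ / ⟪α, x⟫) * (f (reflAlong α x) * g x + f x * g (reflAlong α x)) * δ x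
  have hHi : ∀ α ∈ Rp, Integrable (H α) := by
    intro α hα
    refine ((integrable_mul_of_tsupport_subset hg.continuous hgc hgs
      (((continuousOn_const (c := k α)).mul (hinv α hα)).mul
        ((hf.continuous.comp (continuous_reflAlong α)).continuousOn.mul hδc))).add
      (integrable_mul_of_tsupport_subset hf.continuous hfc hfs
      (((continuousOn_const (c := k α)).mul (hinv α hα)).mul
        ((hg.continuous.comp (continuous_reflAlong α)).continuousOn.mul hδc)))).congr
      (.of_forall fun x => ?_)
    simp only [H, Pi.add_apply, Pi.mul_apply, Function.comp_apply]; ring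
  have hH0 : ∀ α ∈ Rp, ∫ x, H α x = 0 := by
    intro α hα
    refine integral_eq_zero_of_odd α _ fun x => ?_
    simp only [H, reflAlong_reflAlong (hα0 α hα), inner_self_reflAlong (hα0 α hα),
      hδinv α hα, div_neg]
    ring
  have hpt : ∀ x, dunklOp Rp k ξ f x * g x * δ x + f x * dunklOp Rp k ξ g x * δ x
      = ((f x * g x) * fderiv ℝ δ x ξ + fderiv ℝ (fun x => f x * g x) x ξ * δ x)
        - ∑ α ∈ Rp, H α x := by
    intro x
    by_cases hx : x ∈ U
    · rw [hδ' x hx, hfg']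
      have hsum : (∑ α ∈ Rp, k α * (⟪α, ξ⟫ / ⟪α, x⟫) * (f x - f (reflAlong α x))) * (g x * δ x)
          + (∑ α ∈ Rp, k α * (⟪α, ξ⟫ / ⟪α, x⟫) * (g x - g (reflAlong α x))) * (f x * δ x)
          = (∑ α ∈ Rp, 2 * k α * (⟪α, ξ⟫ / ⟪α, x⟫)) * (f x * g x * δ x) - ∑ α ∈ Rp, H α x := by
        simp only [Finset.sum_mul, ← Finset.sum_add_distrib, ← Finset.sum_sub_distrib, H]
        refine Finset.sum_congr rfl fun α _ => ?_
        ring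
      simp only [dunklOp]
      linear_combination hsum
    -- On the hyperplanes `δ` need not be differentiable, but `f` and `g` vanish there.
    · have h1 : f x = 0 := image_eq_zero_of_notMem_tsupport fun h => hx (hfs h)
      have h2 : g x = 0 := image_eq_zero_of_notMem_tsupport fun h => hx (hgs h)
      simp [hfg', h1, h2, H]
  have hBA : Integrable fun x =>
      (f x * g x) * fderiv ℝ δ x ξ + fderiv ℝ (fun x => f x * g x) x ξ * δ x := hB.add hA
  rw [eq_neg_iff_add_eq_zero, ← integral_add hP hQ]
  simp only [hpt]
  rw [integral_sub hBA (integrable_finsetSum _ hHi), integral_add hB hA, hparts,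
    integral_finsetSum _ hHi, Finset.sum_eq_zero hH0]
  ring
end

section
/- Let k ≥ 0 be a real number and let T be the rank-one Dunkl operator on ℝ defined by T f(x) = f'(x) + k·(f(x) − f(−x))/x. Then for all smooth compactly supported functions f, g : ℝ → ℝ whose supports are contained in ℝ \ {0}, one has ∫_ℝ (T f)(x) g(x) |x|^{2k} dx = −∫_ℝ f(x) (T g)(x) |x|^{2k} dx; that is, T is formally skew-adjoint on L²(ℝ, |x|^{2k} dx). -/
/-!
Write `w x = |x| ^ (2 * k)`, so that `w' = 2 k w / x` away from `0`. Pointwise,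
`(T f) g w + f (T g) w = (f g w)' - k (f(-x) g(x) + f(x) g(-x)) w / x`.
The first term is the derivative of a compactly supported `C¹` function and the second is odd,
so both integrate to `0`. Since `f` and `g` vanish near `0`, the singularity at `0` is invisible,
and every integrand is continuous with compact support (`integrable_mul_of_continuousAt`).
-/


open MeasureTheory

/-- A continuous compactly supported function whose support avoids `0` stays integrable after
multiplication by any function which is continuous away from `0`. -/
lemma integrable_mul_of_continuousAt {u c : ℝ → ℝ} (hu : Continuous u)
    (huc : HasCompactSupport u) (hus : tsupport u ⊆ {x : ℝ | x ≠ 0})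
    (hc : ∀ x, x ≠ 0 → ContinuousAt c x) : Integrable (fun x => u x * c x) := by
  refine Continuous.integrable_of_hasCompactSupport ?_ huc.mul_right
  refine continuous_of_tsupport fun x hx => ?_
  exact hu.continuousAt.mul (hc x (hus (tsupport_mul_subset_left hx)))

lemma hasDerivAt_abs_rpow_of_ne_zero (a : ℝ) {x : ℝ} (hx : x ≠ 0) :
    HasDerivAt (fun y : ℝ => |y| ^ a) (|x| ^ a * (a / x)) x := by
  have key : ∀ y : ℝ, y ≠ 0 → |y| ^ a = Real.exp (a * Real.log y) := fun y hy => by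
    rw [Real.rpow_def_of_pos (abs_pos.mpr hy), Real.log_abs, mul_comm]
  have h := ((Real.hasDerivAt_log hx).const_mul a).exp
  rw [← key x hx, ← div_eq_mul_inv] at h
  refine h.congr_of_eventuallyEq ?_
  filter_upwards [isOpen_ne.mem_nhds hx] with y hy using key y hy

/-- **Skew-adjointness of the rank-one Dunkl operator.** For `k ≥ 0` and
`T f(x) = f'(x) + k (f(x) − f(−x))/x`, all smooth compactly supported `f, g`
with supports in `ℝ \ {0}` satisfy
`∫ (T f) g |x|^{2k} dx = −∫ f (T g) |x|^{2k} dx`. -/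
theorem rank_one_dunkl_skew_adjoint (k : ℝ) (hk : 0 ≤ k)
    (T : (ℝ → ℝ) → ℝ → ℝ)
    (hT : ∀ h x, T h x = deriv h x + k * (h x - h (-x)) / x)
    (f g : ℝ → ℝ)
    (hf : ContDiff ℝ (⊤ : ℕ∞) f) (hg : ContDiff ℝ (⊤ : ℕ∞) g)
    (hfc : HasCompactSupport f) (hgc : HasCompactSupport g)
    (hfs : tsupport f ⊆ {x : ℝ | x ≠ 0})
    (hgs : tsupport g ⊆ {x : ℝ | x ≠ 0}) :
    ∫ x : ℝ, T f x * g x * |x| ^ (2 * k) =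
      -∫ x : ℝ, f x * T g x * |x| ^ (2 * k) := by
  have hf1 : ∀ x, HasDerivAt f (deriv f x) x := fun x =>
    (hf.differentiable (by simp)).differentiableAt.hasDerivAt
  have hg1 : ∀ x, HasDerivAt g (deriv g x) x := fun x =>
    (hg.differentiable (by simp)).differentiableAt.hasDerivAt
  have hfd : Continuous (deriv f) := hf.continuous_deriv (by simp)
  have hgd : Continuous (deriv g) := hg.continuous_deriv (by simp)
  have hfC := hf.continuous
  have hgC := hg.continuous
  have hf0 : f 0 = 0 := image_eq_zero_of_notMem_tsupport fun h => hfs h rfl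
  have hg0 : g 0 = 0 := image_eq_zero_of_notMem_tsupport fun h => hgs h rfl
  have hw : ∀ x : ℝ, x ≠ 0 → ContinuousAt (fun y : ℝ => |y| ^ (2 * k)) x := fun x hx =>
    (hasDerivAt_abs_rpow_of_ne_zero (2 * k) hx).continuousAt
  have hTc : ∀ h : ℝ → ℝ, Continuous h → Continuous (deriv h) → ∀ x, x ≠ 0 →
      ContinuousAt (fun y => T h y * |y| ^ (2 * k)) x := by
    intro h hh hh' x hx
    simp only [hT]
    refine ContinuousAt.mul (hh'.continuousAt.add (ContinuousAt.div ?_ continuousAt_id hx)) (hw x hx)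
    fun_prop
  have hRc : ∀ h : ℝ → ℝ, Continuous h → ∀ x, x ≠ 0 →
      ContinuousAt (fun y => k * h (-y) * |y| ^ (2 * k) / y) x := by
    intro h hh x hx
    refine ContinuousAt.div (ContinuousAt.mul ?_ (hw x hx)) continuousAt_id hx
    fun_prop
  have iL : Integrable (fun x => T f x * g x * |x| ^ (2 * k)) :=
    (integrable_mul_of_continuousAt hgC hgc hgs (hTc f hfC hfd)).congr
      (.of_forall fun x => by ring)
  have iR : Integrable (fun x => f x * T g x * |x| ^ (2 * k)) :=
    (integrable_mul_of_continuousAt hfC hfc hfs (hTc g hgC hgd)).congr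
      (.of_forall fun x => by ring)
  let O : ℝ → ℝ := fun x => k * (f (-x) * g x + f x * g (-x)) * |x| ^ (2 * k) / x
  have iO : Integrable O :=
    ((integrable_mul_of_continuousAt hgC hgc hgs (hRc f hfC)).add
      (integrable_mul_of_continuousAt hfC hfc hfs (hRc g hgC))).congr
      (.of_forall fun x => by simp only [O, Pi.add_apply]; ring)
  have iF : Integrable (fun x => f x * (g x * |x| ^ (2 * k))) :=
    integrable_mul_of_continuousAt hfC hfc hfs fun x hx => hgC.continuousAt.mul (hw x hx)
  have hO : ∫ x, O x = 0 := by
    have h1 : ∫ x, O (-x) = ∫ x, O x := integral_neg_eq_self O volume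
    have h2 : ∀ x, O (-x) = -O x := fun x => by
      simp only [O, neg_neg, abs_neg, div_neg]; ring
    simp only [h2, integral_neg] at h1
    linarith
  have hF : ∀ x, HasDerivAt (fun x => f x * (g x * |x| ^ (2 * k)))
      (T f x * g x * |x| ^ (2 * k) + f x * T g x * |x| ^ (2 * k) + O x) x := by
    intro x
    rcases eq_or_ne x 0 with rfl | hx
    -- Near `0` the product vanishes identically because `f` does.
    · have h0 : f =ᶠ[nhds 0] 0 := notMem_tsupport_iff_eventuallyEq.mp fun h => hfs h rfl
      simp only [O, hf0, hg0, mul_zero, zero_mul, add_zero, div_zero]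
      refine (hasDerivAt_const (0 : ℝ) (0 : ℝ)).congr_of_eventuallyEq ?_
      filter_upwards [h0] with y hy
      simp [hy]
    · refine ((hf1 x).mul ((hg1 x).mul
        (hasDerivAt_abs_rpow_of_ne_zero (2 * k) hx))).congr_deriv ?_
      simp only [O, hT, Pi.mul_apply]
      field_simp
      ring
  have h := integral_eq_zero_of_hasDerivAt_of_integrable hF ((iL.add iR).add iO) iF
  have iLR : Integrable (fun x => T f x * g x * |x| ^ (2 * k) + f x * T g x * |x| ^ (2 * k)) :=
    iL.add iR
  rw [integral_add iLR iO, integral_add iL iR, hO] at h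
  linarith
end
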